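/- arXiv:2303.17252 — 3 statements merged into one kernel-verified Lean document; each statement's English description precedes it below -/
import Mathlib

section
/- Let k₁, k₂ be invertible diagonal real n×n matrices, k₃ a diagonal real n×n matrix, J an invertible diagonal real n×n matrix, and Δ a diagonal real n×n matrix. Let e_ζ, ψ, ψ_r ∈ ℝⁿ and set e_ψ = ψ − ψ_r, a = J⁻¹·Δ·(tanh(ψ) − tanh(ψ_r)), and b = −k₂⁻¹·k₁·a − k₂·e_ζ − k₃·e_ψ. Then ⟨k₁·e_ζ + k₂·e_ψ, a⟩ + ⟨k₂·e_ζ + k₃·e_ψ, b⟩ = −⟨ψ − ψ_r, (k₃ − k₂·k₁⁻¹·k₂)·k₂⁻¹·k₁·J⁻¹·Δ·(tanh(ψ) − tanh(ψ_r))⟩ − ‖k₂·e_ζ + k₃·e_ψ‖². -/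
open Matrix

/-!
All matrices are diagonal and `J⁻¹ * Δ` enters both sides only through `a`, so the identity can be
checked coordinate by coordinate. In each coordinate it is the scalar identity
`(k₁ z + k₂ e) a - (k₂ z + k₃ e) (k₁ / k₂) a = -e (k₃ - k₂² / k₁) (k₁ / k₂) a`, where the terms
in `z` cancel and `k₁`, `k₂` are nonzero by invertibility.
-/

/-- An invertible diagonal matrix has nonzero diagonal entries, and its inverse is the diagonal
matrix of their reciprocals. -/
lemma exists_diagonal_of_isDiag_of_isUnit {n : ℕ} {k : Matrix (Fin n) (Fin n) ℝ}
    (hd : k.IsDiag) (hu : IsUnit k) :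
    ∃ d : Fin n → ℝ, (∀ i, d i ≠ 0) ∧ k = diagonal d ∧ k⁻¹ = diagonal fun i => (d i)⁻¹ := by
  have hk : k = diagonal k.diag := hd.diagonal_diag.symm
  have hne : ∀ i, k.diag i ≠ 0 := by
    rw [hk, isUnit_diagonal, Pi.isUnit_iff] at hu
    exact fun i => (hu i).ne_zero
  refine ⟨k.diag, hne, hk, inv_eq_right_inv ?_⟩
  nth_rewrite 1 [hk]
  rw [diagonal_mul_diagonal, ← diagonal_one]
  congr 1
  funext i
  exact mul_inv_cancel₀ (hne i)

/-- The algebraic identity for the time derivative of the Lyapunov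
function along the closed-loop error dynamics:
⟨k₁e_ζ + k₂e_ψ, a⟩ + ⟨k₂e_ζ + k₃e_ψ, b⟩
  = −⟨ψ − ψ_r, (k₃ − k₂k₁⁻¹k₂)k₂⁻¹k₁J⁻¹Δ(tanh ψ − tanh ψ_r)⟩ − ‖k₂e_ζ + k₃e_ψ‖²,
where a = J⁻¹Δ(tanh ψ − tanh ψ_r), b = −k₂⁻¹k₁a − k₂e_ζ − k₃e_ψ, e_ψ = ψ − ψ_r,
inner products are Euclidean and the squared norm is written as a dot product. -/
theorem stmt_10 (n : ℕ) (k₁ k₂ k₃ J Δ : Matrix (Fin n) (Fin n) ℝ)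
    (hd₁ : k₁.IsDiag) (hd₂ : k₂.IsDiag) (hd₃ : k₃.IsDiag)
    (hdJ : J.IsDiag) (hdΔ : Δ.IsDiag)
    (hu₁ : IsUnit k₁) (hu₂ : IsUnit k₂) (huJ : IsUnit J)
    (eζ ψ ψr eψ a b : Fin n → ℝ)
    (heψ : eψ = ψ - ψr)
    (ha : a = (J⁻¹ * Δ).mulVec (fun i => Real.tanh (ψ i) - Real.tanh (ψr i)))
    (hb : b = -(k₂⁻¹ * k₁).mulVec a - k₂.mulVec eζ - k₃.mulVec eψ) :
    (k₁.mulVec eζ + k₂.mulVec eψ) ⬝ᵥ a + (k₂.mulVec eζ + k₃.mulVec eψ) ⬝ᵥ b =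
      -((ψ - ψr) ⬝ᵥ ((k₃ - k₂ * k₁⁻¹ * k₂) * k₂⁻¹ * k₁ * J⁻¹ * Δ).mulVec
          (fun i => Real.tanh (ψ i) - Real.tanh (ψr i)))
        - (k₂.mulVec eζ + k₃.mulVec eψ) ⬝ᵥ (k₂.mulVec eζ + k₃.mulVec eψ) := by
  obtain ⟨d₁, h₁, hk₁, hi₁⟩ := exists_diagonal_of_isDiag_of_isUnit hd₁ hu₁
  obtain ⟨d₂, h₂, hk₂, hi₂⟩ := exists_diagonal_of_isDiag_of_isUnit hd₂ hu₂
  obtain ⟨d₃, hk₃⟩ : ∃ d, k₃ = diagonal d := ⟨k₃.diag, hd₃.diagonal_diag.symm⟩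
  rw [Matrix.mul_assoc _ J⁻¹ Δ, ← mulVec_mulVec _ _ (J⁻¹ * Δ), ← ha, ← heψ, hb, hi₁, hi₂,
    hk₁, hk₂, hk₃]
  simp only [diagonal_mul_diagonal, diagonal_sub, dotProduct, mulVec_diagonal, Pi.add_apply,
    Pi.sub_apply, Pi.neg_apply]
  rw [← Finset.sum_add_distrib, ← Finset.sum_neg_distrib, ← Finset.sum_sub_distrib]
  refine Finset.sum_congr rfl fun i _ => ?_
  have := h₁ i
  have := h₂ i
  field_simp
  ring
end

section
/- Let k₁, k₂, k₃ be diagonal positive definite real n×n matrices such that k₃ − k₂·k₁⁻¹·k₂ is positive definite, let J and Δ be diagonal positive definite real n×n matrices, and let e_ζ, ψ, ψ_r ∈ ℝⁿ with e_ψ = ψ − ψ_r. Then the quantity W = −⟨ψ − ψ_r, (k₃ − k₂·k₁⁻¹·k₂)·k₂⁻¹·k₁·J⁻¹·Δ·(tanh(ψ) − tanh(ψ_r))⟩ − ‖k₂·e_ζ + k₃·e_ψ‖² satisfies W ≤ 0, and W = 0 if and only if (e_ζ, e_ψ) = (0, 0). -/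
/-!
All matrices involved are diagonal with positive entries, and this class is closed under products
and inverses. The weight in the first term is therefore `diagonal m` with `m > 0`, and that term is
the sum of `m i * ((ψ i - ψr i) * (tanh (ψ i) - tanh (ψr i)))`. Strict monotonicity of `tanh` makes
each summand nonnegative, vanishing only if `ψ i = ψr i`. So `W` is minus a sum of two nonnegative
terms. If `W = 0`, the first forces `eψ = 0`; the second then reduces to `k₂ eζ = 0`, and `k₂` is
invertible.
-/

open Matrix

/-- `A` is a diagonal matrix with strictly positive entries, given by an explicit diagonal vector. -/
def IsPosDiagonal {n : ℕ} (A : Matrix (Fin n) (Fin n) ℝ) : Prop :=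
  ∃ d : Fin n → ℝ, (∀ i, 0 < d i) ∧ A = diagonal d

lemma isPosDiagonal_of_posDef {n : ℕ} {A : Matrix (Fin n) (Fin n) ℝ} (hd : A.IsDiag)
    (hA : A.PosDef) : IsPosDiagonal A :=
  ⟨A.diag, fun _ => hA.diag_pos, hd.diagonal_diag.symm⟩

lemma IsPosDiagonal.mul {n : ℕ} {A B : Matrix (Fin n) (Fin n) ℝ} (hA : IsPosDiagonal A)
    (hB : IsPosDiagonal B) : IsPosDiagonal (A * B) := by
  obtain ⟨a, ha, rfl⟩ := hA
  obtain ⟨b, hb, rfl⟩ := hB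
  exact ⟨fun i => a i * b i, fun i => mul_pos (ha i) (hb i), diagonal_mul_diagonal a b⟩

lemma IsPosDiagonal.inv {n : ℕ} {A : Matrix (Fin n) (Fin n) ℝ} (hA : IsPosDiagonal A) :
    IsPosDiagonal A⁻¹ := by
  obtain ⟨a, ha, rfl⟩ := hA
  refine ⟨fun i => (a i)⁻¹, fun i => inv_pos.2 (ha i), Matrix.inv_eq_right_inv ?_⟩
  rw [diagonal_mul_diagonal, ← diagonal_one]
  congr 1
  funext i
  exact mul_inv_cancel₀ (ha i).ne'

lemma IsPosDiagonal.isDiag {n : ℕ} {A : Matrix (Fin n) (Fin n) ℝ} (hA : IsPosDiagonal A) :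
    A.IsDiag := by
  obtain ⟨a, -, rfl⟩ := hA
  exact isDiag_diagonal a

lemma tanh_strictMono : StrictMono Real.tanh := fun x y h => by
  -- `artanh` is strictly increasing on `(-1, 1)` and inverts `tanh`.
  rwa [← Real.artanh_lt_artanh_iff ⟨Real.neg_one_lt_tanh x, Real.tanh_lt_one x⟩
    ⟨Real.neg_one_lt_tanh y, Real.tanh_lt_one y⟩, Real.artanh_tanh, Real.artanh_tanh]

lemma sub_mul_tanh_sub_nonneg (x y : ℝ) : 0 ≤ (x - y) * (Real.tanh x - Real.tanh y) := by
  rcases le_total x y with h | h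
  · exact mul_nonneg_of_nonpos_of_nonpos (sub_nonpos.2 h)
      (sub_nonpos.2 (tanh_strictMono.monotone h))
  · exact mul_nonneg (sub_nonneg.2 h) (sub_nonneg.2 (tanh_strictMono.monotone h))

lemma eq_of_sub_mul_tanh_sub_eq_zero {x y : ℝ}
    (h : (x - y) * (Real.tanh x - Real.tanh y) = 0) : x = y := by
  rcases mul_eq_zero.1 h with h | h
  · exact sub_eq_zero.1 h
  · exact tanh_strictMono.injective (sub_eq_zero.1 h)



/-- With k₁, k₂, k₃ diagonal positive definite, k₃ − k₂k₁⁻¹k₂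
positive definite, and J, Δ diagonal positive definite, the Lyapunov derivative
W = −⟨ψ − ψ_r, (k₃ − k₂k₁⁻¹k₂)k₂⁻¹k₁J⁻¹Δ(tanh ψ − tanh ψ_r)⟩ − ‖k₂e_ζ + k₃e_ψ‖²
satisfies W ≤ 0, with W = 0 if and only if (e_ζ, e_ψ) = (0, 0). -/
theorem stmt_11 (n : ℕ) (k₁ k₂ k₃ J Δ : Matrix (Fin n) (Fin n) ℝ)
    (hd₁ : k₁.IsDiag) (hd₂ : k₂.IsDiag) (hd₃ : k₃.IsDiag)
    (hdJ : J.IsDiag) (hdΔ : Δ.IsDiag)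
    (hpd₁ : k₁.PosDef) (hpd₂ : k₂.PosDef) (hpd₃ : k₃.PosDef)
    (hpds : (k₃ - k₂ * k₁⁻¹ * k₂).PosDef) (hpdJ : J.PosDef) (hpdΔ : Δ.PosDef)
    (eζ ψ ψr eψ : Fin n → ℝ) (heψ : eψ = ψ - ψr)
    (W : ℝ)
    (hW : W = -((ψ - ψr) ⬝ᵥ ((k₃ - k₂ * k₁⁻¹ * k₂) * k₂⁻¹ * k₁ * J⁻¹ * Δ).mulVec
          (fun i => Real.tanh (ψ i) - Real.tanh (ψr i)))
        - (k₂.mulVec eζ + k₃.mulVec eψ) ⬝ᵥ (k₂.mulVec eζ + k₃.mulVec eψ)) :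
    W ≤ 0 ∧ (W = 0 ↔ eζ = 0 ∧ eψ = 0) := by
  have p₁ := isPosDiagonal_of_posDef hd₁ hpd₁
  have p₂ := isPosDiagonal_of_posDef hd₂ hpd₂
  have pJ := isPosDiagonal_of_posDef hdJ hpdJ
  have pΔ := isPosDiagonal_of_posDef hdΔ hpdΔ
  have ps := isPosDiagonal_of_posDef (hd₃.sub ((p₂.mul p₁.inv).mul p₂).isDiag) hpds
  obtain ⟨m, hm, hM⟩ := (((ps.mul p₂.inv).mul p₁).mul pJ.inv).mul pΔ
  obtain ⟨b, hb, hB⟩ := p₂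
  rw [hM] at hW
  have hP : (ψ - ψr) ⬝ᵥ (diagonal m).mulVec (fun i => Real.tanh (ψ i) - Real.tanh (ψr i))
      = ∑ i, m i * ((ψ i - ψr i) * (Real.tanh (ψ i) - Real.tanh (ψr i))) := by
    simp only [dotProduct, mulVec_diagonal, Pi.sub_apply]
    exact Finset.sum_congr rfl fun i _ => by ring
  have hnn : ∀ i ∈ Finset.univ,
      0 ≤ m i * ((ψ i - ψr i) * (Real.tanh (ψ i) - Real.tanh (ψr i))) :=
    fun i _ => mul_nonneg (hm i).le (sub_mul_tanh_sub_nonneg _ _)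
  have hP0 := Finset.sum_nonneg hnn
  rw [hP] at hW
  have hQ0 : 0 ≤ (k₂.mulVec eζ + k₃.mulVec eψ) ⬝ᵥ (k₂.mulVec eζ + k₃.mulVec eψ) :=
    Finset.sum_nonneg fun i _ => mul_self_nonneg _
  refine ⟨by linarith, fun hW0 => ?_, ?_⟩
  · have hψ : eψ = 0 := by
      rw [heψ, sub_eq_zero]
      funext i
      have hi := (Finset.sum_eq_zero_iff_of_nonneg hnn).1 (by linarith) i (Finset.mem_univ i)
      exact eq_of_sub_mul_tanh_sub_eq_zero ((mul_eq_zero.1 hi).resolve_left (hm i).ne')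
    refine ⟨?_, hψ⟩
    have hQ := dotProduct_self_eq_zero.1 (show (k₂.mulVec eζ + k₃.mulVec eψ) ⬝ᵥ
      (k₂.mulVec eζ + k₃.mulVec eψ) = 0 by linarith)
    rw [hψ, mulVec_zero, add_zero, hB] at hQ
    funext i
    have hi := congrFun hQ i
    rw [mulVec_diagonal] at hi
    exact (mul_eq_zero.1 hi).resolve_left (hb i).ne'
  · rintro ⟨hζ, hψ⟩
    have hψr : ψ = ψr := sub_eq_zero.1 (heψ.symm.trans hψ)
    rw [hW, hζ, hψ, hψr]
    simp
end

section
/- Along any solution of the closed-loop error dynamics, the Lyapunov function is nonincreasing: if e_ζ, e_ψ : [0, ∞) → ℝⁿ are differentiable, ψ_r, ζ : [0, ∞) → ℝⁿ are arbitrary functions, ψ(t) = e_ψ(t) + ψ_r(t), and for every t ≥ 0 one has ė_ζ(t) = J_ζ(t)⁻¹·diag(δ_q̇)·(tanh(ψ(t)) − tanh(ψ_r(t))) with J_ζ(t) = diag(δ_{q,i}·(1 − tanh²(ζᵢ(t)))), and ė_ψ(t) + k₂⁻¹·k₁·ė_ζ(t) = −k₂·e_ζ(t) − k₃·e_ψ(t),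 then the function t ↦ V(e_ζ(t), e_ψ(t)) is antitone (monotonically nonincreasing) on [0, ∞). -/
open Matrix

/-! All matrices involved are diagonal, so `V` is a sum over coordinates of
`½ (a z² + 2 b z p + c p²)`, where `a`, `b`, `c > 0` are the diagonal entries of `k₁`, `k₂`, `k₃`
and `z`, `p` the coordinates of the two errors. With `p' = -(a / b) z' - (b z + c p)`, the
derivative of such a summand is
`-((a c - b²) / b) (z' p) - (b z + c p)²`.
The Schur complement condition says `a c - b² > 0`, and `z'` is a positive multiple of
`tanh (p + r) - tanh r`, so `z' p ≥ 0` because `tanh` is increasing (`tanh_monotone_aux`).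
Hence every summand has nonpositive derivative (`summand_deriv_nonpos`). -/

lemma tanh_monotone_aux : Monotone Real.tanh := by
  intro x y h
  rw [Real.tanh_eq_sinh_div_cosh, Real.tanh_eq_sinh_div_cosh,
    div_le_div_iff₀ (Real.cosh_pos x) (Real.cosh_pos y)]
  have h1 : 0 ≤ Real.sinh (y - x) := Real.sinh_nonneg_iff.2 (sub_nonneg.2 h)
  rw [Real.sinh_sub] at h1
  linarith

lemma inv_diagonal_apply {n : ℕ} (v : Fin n → ℝ) (hv : ∀ i, v i ≠ 0) :
    (Matrix.diagonal v)⁻¹ = Matrix.diagonal fun i => (v i)⁻¹ := by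
  apply Matrix.inv_eq_left_inv
  rw [Matrix.diagonal_mul_diagonal, ← Matrix.diagonal_one]
  congr 1
  funext i
  exact inv_mul_cancel₀ (hv i)

lemma tanh_increment_mul_nonneg (p r : ℝ) :
    0 ≤ (Real.tanh (p + r) - Real.tanh r) * p := by
  rcases le_total 0 p with h | h
  · exact mul_nonneg (sub_nonneg.2 (tanh_monotone_aux (by linarith))) h
  · exact mul_nonneg_of_nonpos_of_nonpos
      (sub_nonpos.2 (tanh_monotone_aux (by linarith))) h

/-- The left-hand side is the derivative of `½ (a z² + 2 b z p + c p²)` when `z` has derivative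
`w` and `p` has derivative `-(a / b) w - b z - c p`. -/
lemma summand_deriv_nonpos {a b c z p w : ℝ} (ha : 0 < a) (hb : 0 < b)
    (hs : 0 < c - b * a⁻¹ * b) (hw : 0 ≤ w * p) :
    w * (a * z + b * p) + (b * z + c * p) * (-(b⁻¹ * a * w) - b * z - c * p) ≤ 0 := by
  have key : w * (a * z + b * p) + (b * z + c * p) * (-(b⁻¹ * a * w) - b * z - c * p)
      = -((c - b * a⁻¹ * b) * (a * b⁻¹) * (w * p)) - (b * z + c * p) ^ 2 := by
    field_simp
    ring
  have h1 : 0 ≤ (c - b * a⁻¹ * b) * (a * b⁻¹) * (w * p) := by positivity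
  rw [key]
  nlinarith [sq_nonneg (b * z + c * p)]

/-- Along any solution of the closed-loop error dynamics, the
Lyapunov function t ↦ V(e_ζ(t), e_ψ(t)) is monotonically nonincreasing on [0, ∞). -/
theorem stmt_12 (n : ℕ) (hn : 1 ≤ n)
    (δq δqdot : Fin n → ℝ) (hδq : ∀ i, 0 < δq i) (hδqdot : ∀ i, 0 < δqdot i)
    (k₁ k₂ k₃ : Matrix (Fin n) (Fin n) ℝ)
    (hd₁ : k₁.IsDiag) (hd₂ : k₂.IsDiag) (hd₃ : k₃.IsDiag)
    (hpd₁ : k₁.PosDef) (hpd₂ : k₂.PosDef) (hpd₃ : k₃.PosDef)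
    (hpds : (k₃ - k₂ * k₁⁻¹ * k₂).PosDef)
    (V : (Fin n → ℝ) → (Fin n → ℝ) → ℝ)
    (hV : ∀ eζ eψ, V eζ eψ = (1 / 2) *
      (eζ ⬝ᵥ k₁.mulVec eζ + 2 * (eζ ⬝ᵥ k₂.mulVec eψ) + eψ ⬝ᵥ k₃.mulVec eψ))
    (eζ eψ ψr ζ ψ : ℝ → (Fin n → ℝ))
    (hψ : ∀ t, ψ t = eψ t + ψr t)
    (Jζ : ℝ → Matrix (Fin n) (Fin n) ℝ)
    (hJζ : ∀ t, Jζ t = Matrix.diagonal fun i => δq i * (1 - Real.tanh (ζ t i) ^ 2))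
    (eζ' : ℝ → (Fin n → ℝ))
    (heζ' : ∀ t, eζ' t = ((Jζ t)⁻¹ * Matrix.diagonal δqdot).mulVec
      (fun i => Real.tanh (ψ t i) - Real.tanh (ψr t i)))
    (hderivζ : ∀ t ∈ Set.Ici (0 : ℝ), HasDerivAt eζ (eζ' t) t)
    (hderivψ : ∀ t ∈ Set.Ici (0 : ℝ), HasDerivAt eψ
      (-(k₂⁻¹ * k₁).mulVec (eζ' t) - k₂.mulVec (eζ t) - k₃.mulVec (eψ t)) t) :
    AntitoneOn (fun t => V (eζ t) (eψ t)) (Set.Ici (0 : ℝ)) := by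
  obtain ⟨a, rfl⟩ : ∃ a, k₁ = Matrix.diagonal a := ⟨_, hd₁.diagonal_diag.symm⟩
  obtain ⟨b, rfl⟩ : ∃ b, k₂ = Matrix.diagonal b := ⟨_, hd₂.diagonal_diag.symm⟩
  obtain ⟨c, rfl⟩ : ∃ c, k₃ = Matrix.diagonal c := ⟨_, hd₃.diagonal_diag.symm⟩
  have ha := Matrix.posDef_diagonal_iff.1 hpd₁
  have hb := Matrix.posDef_diagonal_iff.1 hpd₂
  have hs : ∀ i, 0 < c i - b i * (a i)⁻¹ * b i := by
    rw [inv_diagonal_apply a fun i => (ha i).ne', Matrix.diagonal_mul_diagonal,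
      Matrix.diagonal_mul_diagonal, Matrix.diagonal_sub] at hpds
    exact Matrix.posDef_diagonal_iff.1 hpds
  have hJ : ∀ t i, 0 < δq i * (1 - Real.tanh (ζ t i) ^ 2) := fun t i =>
    mul_pos (hδq i) (by nlinarith [Real.tanh_lt_one (ζ t i), Real.neg_one_lt_tanh (ζ t i)])
  have hw : ∀ t i, 0 ≤ eζ' t i * eψ t i := by
    intro t i
    rw [heζ', hJζ, inv_diagonal_apply _ fun i => (hJ t i).ne', Matrix.diagonal_mul_diagonal,
      Matrix.mulVec_diagonal, hψ, Pi.add_apply, mul_assoc]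
    exact mul_nonneg (mul_nonneg (inv_nonneg.2 (hJ t i).le) (hδqdot i).le)
      (tanh_increment_mul_nonneg _ _)
  have hVsum : (fun t => V (eζ t) (eψ t)) = fun t => ∑ i, (1 / 2) *
      (a i * eζ t i ^ 2 + 2 * (b i * (eζ t i * eψ t i)) + c i * eψ t i ^ 2) := by
    funext t
    simp only [hV, dotProduct, Matrix.mulVec_diagonal]
    rw [Finset.mul_sum, ← Finset.sum_add_distrib, ← Finset.sum_add_distrib, Finset.mul_sum]
    exact Finset.sum_congr rfl fun i _ => by ring
  have hder : ∀ t ∈ Set.Ici (0 : ℝ), HasDerivAt (fun t => V (eζ t) (eψ t))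
      (∑ i, (eζ' t i * (a i * eζ t i + b i * eψ t i) + (b i * eζ t i + c i * eψ t i) *
        (-((b i)⁻¹ * a i * eζ' t i) - b i * eζ t i - c i * eψ t i))) t := by
    intro t ht
    rw [hVsum]
    refine HasDerivAt.fun_sum fun i _ => ?_
    have hz := hasDerivAt_pi.1 (hderivζ t ht) i
    have hp := hasDerivAt_pi.1 (hderivψ t ht) i
    rw [inv_diagonal_apply b fun i => (hb i).ne', Matrix.diagonal_mul_diagonal] at hp
    simp only [Pi.sub_apply, Pi.neg_apply, Matrix.mulVec_diagonal] at hp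
    refine (((((hz.fun_pow 2).const_mul (a i)).fun_add
      (((hz.fun_mul hp).const_mul (b i)).const_mul 2)).fun_add
        ((hp.fun_pow 2).const_mul (c i))).const_mul (1 / 2)).congr_deriv ?_
    push_cast
    ring
  refine antitoneOn_of_hasDerivWithinAt_nonpos (convex_Ici 0)
    (fun t ht => (hder t ht).continuousAt.continuousWithinAt)
    (fun t ht => (hder t (interior_subset ht)).hasDerivWithinAt) fun t _ => ?_
  exact Finset.sum_nonpos fun i _ => summand_deriv_nonpos (ha i) (hb i) (hs i) (hw t i)
end
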